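/- Let p be a prime number, F a field of characteristic p, and d ≥ 1. Let H ⊆ GL_d(F) be a finite subgroup whose order is a power of p. Then there exists a chain H = H_0 ⊇ H_1 ⊇ ⋯ ⊇ H_{d−1} = {1} of normal subgroups of H such that each successive quotient H_{i−1}/H_i is abelian and every element of H_{i−1}/H_i has order dividing p, for i = 1,…,d−1. (When d = 1 this asserts that H is trivial.) -/

import Mathlib

lemma exists_fixed_aux0 {p : ℕ} [Fact p.Prime] {F : Type*} [Field F] [CharP F p]
    {G : Type*} [Group G] [Finite G] (hG : IsPGroup p G)
    {W : Type*} [AddCommGroup W] [Module F W] [Module (ZMod p) W]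
    (ρ : Representation F G W) (w : W) (hw : w ≠ 0) : ∃ v : W, v ≠ 0 ∧ ∀ g, ρ g v = v := by
  have hpw : ∀ x : W, p • x = 0 := fun x => by
    rw [← Nat.cast_smul_eq_nsmul F, CharP.cast_eq_zero, zero_smul]
  let S : Submodule (ZMod p) W := Submodule.span (ZMod p) (Set.range fun g => ρ g w)
  have : Module.Finite (ZMod p) ↥S := by
    exact Module.Finite.span_of_finite (ZMod p) (Set.finite_range _)
  haveI : Finite S := Module.finite_of_finite (ZMod p)
  have hS : ∀ g, ∀ x ∈ S, ρ g x ∈ S := by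
    intro g x hx
    have : S ≤ S.comap (((ρ g).toAddMonoidHom).toZModLinearMap p) := by
      refine Submodule.span_le.2 ?_
      rintro _ ⟨h, rfl⟩
      refine Submodule.subset_span ⟨g * h, ?_⟩
      simp
    exact this hx
  letI : MulAction G S :=
    { smul := fun g x => ⟨ρ g x, hS g x x.2⟩
      one_smul := fun x => Subtype.ext (by change ρ 1 (x : W) = x; simp)
      mul_smul := fun g h x => Subtype.ext (by
        change ρ (g * h) (x : W) = ρ g (ρ h x); simp) }
  have hwS : w ∈ S := Submodule.subset_span ⟨1, by simp⟩
  have hdvd : p ∣ Nat.card S := by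
    have h1 : addOrderOf (⟨w, hwS⟩ : S) = p := by
      apply addOrderOf_eq_prime
      · exact Subtype.ext (hpw w)
      · intro h; exact hw (congrArg Subtype.val h)
    exact (dvd_of_eq h1.symm).trans (addOrderOf_dvd_natCard _)
  obtain ⟨b, hb, hb0⟩ := hG.exists_fixed_point_of_prime_dvd_card_of_fixed_point S hdvd
    (a := 0) (fun g => Subtype.ext (map_zero (ρ g)))
  refine ⟨b, fun h => hb0 (Subtype.ext h.symm), fun g => congrArg Subtype.val (hb g)⟩

lemma exists_fixed_aux {p : ℕ} [Fact p.Prime] {F : Type*} [Field F] [CharP F p]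
    {G : Type*} [Group G] [Finite G] (hG : IsPGroup p G)
    {W : Type*} [AddCommGroup W] [Module F W] (ρ : Representation F G W)
    (w : W) (hw : w ≠ 0) : ∃ v : W, v ≠ 0 ∧ ∀ g, ρ g v = v := by
  have hpw : ∀ x : W, p • x = 0 := fun x => by
    rw [← Nat.cast_smul_eq_nsmul F, CharP.cast_eq_zero, zero_smul]
  let _ : Module (ZMod p) W := AddCommGroup.zmodModule hpw
  exact exists_fixed_aux0 hG ρ w hw

/-- Upper socle series of a representation. -/
noncomputable def socSeries {F : Type*} [Field F] {G : Type*} [Group G]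
    {W : Type*} [AddCommGroup W] [Module F W] (ρ : Representation F G W) : ℕ → Submodule F W
  | 0 => ⊥
  | j + 1 => ⨅ g, (socSeries ρ j).comap (ρ g - 1)

section
variable {F : Type*} [Field F] {G : Type*} [Group G]
    {W : Type*} [AddCommGroup W] [Module F W] (ρ : Representation F G W)

lemma mem_soc_succ {j : ℕ} {v : W} :
    v ∈ socSeries ρ (j + 1) ↔ ∀ g, ρ g v - v ∈ socSeries ρ j := by
  simp [socSeries, Submodule.mem_iInf]

lemma soc_le_succ (j : ℕ) : socSeries ρ j ≤ socSeries ρ (j + 1) := by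
  induction j with
  | zero => simp [socSeries]
  | succ j ih =>
    intro v hv
    rw [mem_soc_succ] at hv ⊢
    exact fun g => ih (hv g)

lemma soc_mono : Monotone (socSeries ρ) := monotone_nat_of_le_succ (soc_le_succ ρ)

lemma soc_inv (j : ℕ) (g : G) {v : W} (hv : v ∈ socSeries ρ j) : ρ g v ∈ socSeries ρ j := by
  have h := (mem_soc_succ ρ).1 (soc_le_succ ρ j hv) g
  simpa using add_mem h hv

lemma soc_lt {p : ℕ} [Fact p.Prime] [CharP F p] [Finite G] (hG : IsPGroup p G) (j : ℕ)
    (hj : socSeries ρ j ≠ ⊤) : socSeries ρ j < socSeries ρ (j + 1) := by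
  obtain ⟨w, hw⟩ : ∃ w, w ∉ socSeries ρ j := by
    by_contra! h
    exact hj (eq_top_iff.2 fun w _ => h w)
  obtain ⟨v, hv0, hv⟩ := exists_fixed_aux hG
    (ρ.quotient (socSeries ρ j) (fun g x hx => soc_inv ρ j g hx))
    ((socSeries ρ j).mkQ w) (by simpa using hw)
  obtain ⟨v, rfl⟩ := (socSeries ρ j).mkQ_surjective v
  refine lt_of_le_of_ne (soc_le_succ ρ j) fun heq => hv0 ?_
  have : v ∈ socSeries ρ (j + 1) := by
    rw [mem_soc_succ]
    intro g
    have := hv g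
    simp only [Representation.quotient_apply, Submodule.mkQ_apply, Submodule.mapQ_apply] at this
    exact (Submodule.Quotient.eq _).1 this
  rw [← heq] at this
  simpa using this

lemma soc_top {p : ℕ} [Fact p.Prime] [CharP F p] [Finite G] (hG : IsPGroup p G)
    [FiniteDimensional F W] : socSeries ρ (Module.finrank F W) = ⊤ := by
  have key : ∀ j, socSeries ρ j = ⊤ ∨ j ≤ Module.finrank F (socSeries ρ j) := by
    intro j
    induction j with
    | zero => right; simp
    | succ j ih =>
      by_cases h : socSeries ρ j = ⊤
      · left; exact top_le_iff.1 (h ▸ soc_le_succ ρ j)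
      · right
        have h1 := ih.resolve_left h
        have := Submodule.finrank_lt_finrank_of_lt (soc_lt ρ hG j h)
        omega
  rcases key (Module.finrank F W) with h | h
  · exact h
  · exact Submodule.eq_top_of_finrank_eq (le_antisymm (Submodule.finrank_le _) h)

/-- The filtration of the group, by how far elements move the socle series. -/
def filtK (i : ℕ) : Subgroup G where
  carrier := {h | ∀ j, ∀ v ∈ socSeries ρ (j + 1), ρ h v - v ∈ socSeries ρ (j - i)}
  one_mem' := by intro j v _; simp
  mul_mem' := by
    intro a b ha hb j v hv
    have h1 := ha j _ (soc_inv ρ _ b hv)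
    have h2 := hb j v hv
    simpa using add_mem h1 h2
  inv_mem' := by
    intro a ha j v hv
    have h1 := neg_mem (ha j _ (soc_inv ρ _ a⁻¹ hv))
    simpa using h1

lemma filtK_comm {i : ℕ} {x y : G} (hx : x ∈ filtK ρ i) (hy : y ∈ filtK ρ i) {j : ℕ} {v : W}
    (hv : v ∈ socSeries ρ (j + 1)) :
    ρ x (ρ y v - v) - (ρ y v - v) ∈ socSeries ρ (j - (i + 1)) := by
  have h1 := hy j v hv
  rcases Nat.eq_zero_or_pos (j - i) with h0 | h0
  · rw [h0] at h1
    have h2 : ρ y v - v = 0 := by simpa [socSeries] using h1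
    rw [h2]; simp
  · have e : j - i = (j - (i + 1)) + 1 := by omega
    rw [e] at h1
    exact soc_mono ρ (Nat.sub_le _ _) (hx _ _ h1)

lemma filtK_commutator {i : ℕ} {x y : G} (hx : x ∈ filtK ρ i) (hy : y ∈ filtK ρ i) :
    x * y * x⁻¹ * y⁻¹ ∈ filtK ρ (i + 1) := by
  intro j v hv
  obtain ⟨u, rfl⟩ : ∃ u, v = ρ (y * x) u := ⟨ρ (y * x)⁻¹ v, by simp⟩
  have hu : u ∈ socSeries ρ (j + 1) := by
    have := soc_inv ρ _ (y * x)⁻¹ hv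
    rwa [← Module.End.mul_apply, ← map_mul, inv_mul_cancel, map_one, Module.End.one_apply] at this
  have h := sub_mem (filtK_comm ρ hx hy hu) (filtK_comm ρ hy hx hu)
  have e : ρ (x * y * x⁻¹ * y⁻¹) (ρ (y * x) u) = ρ x (ρ y u) := by
    rw [← Module.End.mul_apply, ← map_mul, ← Module.End.mul_apply, ← map_mul]
    congr 2; group
  rw [e]
  convert h using 1
  simp only [map_mul, Module.End.mul_apply, map_sub]
  abel

lemma filtK_pow {p : ℕ} (hp : p.Prime) [CharP F p] {i : ℕ} {x : G} (hx : x ∈ filtK ρ i) :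
    x ^ p ∈ filtK ρ (i + 1) := by
  intro j v hv
  haveI := Fact.mk hp
  have hz : (p : Module.End F W) = 0 := by
    ext v
    rw [← map_natCast (algebraMap F (Module.End F W)), CharP.cast_eq_zero]; simp
  have hpow : ρ (x ^ p) - 1 = (ρ x - 1) ^ p := by
    have hc : Commute (ρ x - 1) 1 := Commute.one_right _
    obtain ⟨r, hr⟩ := hc.exists_add_pow_prime_eq hp
    simp only [sub_add_cancel, one_pow, hz, zero_mul, add_zero] at hr
    rw [map_pow, hr]; simp
  have key : ∀ n : ℕ, ((ρ x - 1 : Module.End F W) ^ (n + 2)) v ∈ socSeries ρ (j - (i + 1)) := by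
    intro n
    induction n with
    | zero => simpa [pow_two] using filtK_comm ρ hx hx hv
    | succ n ih =>
      rw [show n + 1 + 2 = (n + 2) + 1 from rfl, pow_succ', Module.End.mul_apply]
      exact sub_mem (soc_inv ρ _ x ih) ih
  have := key (p - 2)
  rw [Nat.sub_add_cancel hp.two_le, ← hpow] at this
  simpa using this

lemma filtK_normal {i : ℕ} {x : G} (g : G) (hx : x ∈ filtK ρ i) :
    g * x * g⁻¹ ∈ filtK ρ i := by
  intro j v hv
  have h := soc_inv ρ _ g (hx j _ (soc_inv ρ _ g⁻¹ hv))
  simpa using h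

end


/-- Corollary `cor:length d-1`: a finite `p`-subgroup `H` of `GL_d(F)`, `F` of characteristic
`p`, admits a chain `H = H_0 ⊇ H_1 ⊇ ⋯ ⊇ H_{d-1} = {1}` of normal subgroups of `H` whose
successive quotients are abelian of exponent dividing `p`. -/
theorem stmt_3 (p : ℕ) (hp : p.Prime) (F : Type*) [Field F] [CharP F p]
    (d : ℕ) (hd : 1 ≤ d)
    (H : Subgroup (GL (Fin d) F)) [Fintype H] (hH : ∃ n : ℕ, Fintype.card H = p ^ n) :
    ∃ K : ℕ → Subgroup (GL (Fin d) F),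
      K 0 = H ∧ K (d - 1) = ⊥ ∧
      (∀ i : ℕ, K (i + 1) ≤ K i) ∧
      (∀ i : ℕ, K i ≤ H) ∧
      (∀ i : ℕ, ∀ h ∈ H, ∀ x ∈ K i, h * x * h⁻¹ ∈ K i) ∧
      (∀ i : ℕ, i < d - 1 → ∀ x ∈ K i, ∀ y ∈ K i, x * y * x⁻¹ * y⁻¹ ∈ K (i + 1)) ∧
      (∀ i : ℕ, i < d - 1 → ∀ x ∈ K i, x ^ p ∈ K (i + 1)) := by


  obtain ⟨n, hn⟩ := hH
  haveI := Fact.mk hp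
  have hG : IsPGroup p H := IsPGroup.of_card (n := n) (by rw [Nat.card_eq_fintype_card, hn])
  let ρ : Representation F H (Fin d → F) :=
    ((Matrix.toLinAlgEquiv' : Matrix (Fin d) (Fin d) F ≃ₐ[F] _) :
      Matrix (Fin d) (Fin d) F →* ((Fin d → F) →ₗ[F] (Fin d → F))).comp
      ((Units.coeHom _).comp H.subtype)
  have hinj : ∀ g : H, ρ g = 1 → g = 1 := by
    intro g hg
    apply Subtype.ext
    apply Units.ext
    apply (Matrix.toLinAlgEquiv' : Matrix (Fin d) (Fin d) F ≃ₐ[F] _).injective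
    refine Eq.trans hg ?_
    simp
  have htop : socSeries ρ d = ⊤ := by simpa using soc_top ρ hG
  have hmem : ∀ i (x : GL (Fin d) F), x ∈ (filtK ρ i).map H.subtype ↔
      ∃ h : x ∈ H, (⟨x, h⟩ : H) ∈ filtK ρ i := by
    intro i x
    simp [Subgroup.mem_map]
  refine ⟨fun i => (filtK ρ i).map H.subtype, ?_, ?_, ?_, ?_, ?_, ?_, ?_⟩
  · ext x
    rw [hmem]
    exact ⟨fun h => h.1, fun h => ⟨h, fun j v hv => (mem_soc_succ ρ).1 hv _⟩⟩
  · rw [eq_bot_iff]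
    intro x hx
    obtain ⟨h, hx⟩ := (hmem _ _).1 hx
    have : (⟨x, h⟩ : H) = 1 := by
      apply hinj
      refine LinearMap.ext fun v => ?_
      have := hx (d - 1) v (by rw [Nat.sub_add_cancel hd, htop]; trivial)
      rw [Nat.sub_self] at this
      exact sub_eq_zero.1 ((Submodule.mem_bot F).1 this)
    exact congrArg Subtype.val this
  · intro i
    exact Subgroup.map_mono fun x hx j v hv => soc_mono ρ (by omega) (hx j v hv)
  · intro i x hx
    exact ((hmem _ _).1 hx).1
  · rintro i h hh _ ⟨x, hx, rfl⟩
    exact ⟨_, filtK_normal ρ ⟨h, hh⟩ hx, rfl⟩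
  · rintro i - _ ⟨x, hx, rfl⟩ _ ⟨y, hy, rfl⟩
    exact ⟨_, filtK_commutator ρ hx hy, rfl⟩
  · rintro i - _ ⟨x, hx, rfl⟩
    exact ⟨_, filtK_pow ρ hp hx, rfl⟩
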